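/- Let n ≥ 1 be a natural number. Let m₀, …, m_n be positive reals, Q₀, …, Q_{n−1} reals with Q_k > 1, and z⁻₀, …, z⁻_n and z⁺₀, …, z⁺_{n−1} positive reals satisfying the jump relations m_{k+1}·z⁺_k = Q_k·m_k·z⁻_k for 0 ≤ k ≤ n−1. Let u₀, …, u_n be reals satisfying the forward characteristic relations u_{k+1} + m_{k+1}·z⁻_{k+1} = u_k + m_{k+1}·z⁺_k for 0 ≤ k ≤ n−1. Then u_n − u₀ > −m_n·z⁻_n + m₀·z⁻₀. -/

import Mathlib

/-- Telescoping estimate along a forward characteristic crossing `n` increasing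
entropy jumps: `u_n − u₀ > −m_n·z⁻_n + m₀·z⁻₀`. -/
theorem forward_characteristic_estimate (n : ℕ) (hn : 1 ≤ n)
    (m zminus zplus : ℕ → ℝ) (Q : ℕ → ℝ) (u : ℕ → ℝ)
    (hm : ∀ k ≤ n, 0 < m k)
    (hQ : ∀ k < n, 1 < Q k)
    (hzminus : ∀ k ≤ n, 0 < zminus k)
    (hzplus : ∀ k < n, 0 < zplus k)
    (hjump : ∀ k < n, m (k + 1) * zplus k = Q k * (m k * zminus k))
    (hchar : ∀ k < n, u (k + 1) + m (k + 1) * zminus (k + 1) = u k + m (k + 1) * zplus k) :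
    u n - u 0 > -(m n * zminus n) + m 0 * zminus 0 := by
  have step : ∀ k < n, u k + m k * zminus k < u (k + 1) + m (k + 1) * zminus (k + 1) := by
    intro k hk
    have hp : 0 < m k * zminus k := mul_pos (hm k hk.le) (hzminus k hk.le)
    have h1 := hjump k hk
    have h2 := hchar k hk
    have h3 := mul_pos (sub_pos.mpr (hQ k hk)) hp
    linarith
  have key : ∀ k, 1 ≤ k → k ≤ n → u 0 + m 0 * zminus 0 < u k + m k * zminus k := by
    intro k h1
    induction k, h1 using Nat.le_induction with
    | base => intro h; exact step 0 (by omega)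
    | succ k hk ih =>
      intro h
      exact (ih (by omega)).trans (step k (by omega))
  have := key n hn le_rfl
  linarith
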